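/- arXiv:2505.15290 — 2 statements merged into one kernel-verified Lean document; each statement's English description precedes it below -/
import Mathlib

section
/- Fix a finite state set S, a finite label set L and a labelling ℓ : S → L taking at least two distinct values. For all transition probability functions σ, τ : S → D(S) and every S²_Δ-closed policy P for σ, there exists an S²_Δ-closed policy Q for τ such that d_F(P, Q) ≤ 2 · d_F(σ, τ). -/
/-!
When one marginal of a coupling `ω` changes from `μ` to `μ'`, keep in row `x` the fraction
`min (μ x) (μ' x) / μ x` of the mass of `ω`, and spread the deficits of the rows over the deficits
of the columns proportionally. In row `x` the mass removed and the mass added are each at most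
`|μ x - μ' x|`, so no entry moves by more than that. Changing the two marginals in turn gives the
constant `2`. On a diagonal pair this could leave the diagonal, but a coupling supported on the
diagonal is determined by its marginal, so there the diagonal coupling of the new marginal works.
-/

open Finset Filter
open scoped Classical

/-- `μ` is a probability distribution on the finite type `X`. -/
def IsDist {X : Type*} [Fintype X] (μ : X → ℝ) : Prop :=
  (∀ x, 0 ≤ μ x) ∧ ∑ x, μ x = 1

/-- `ω` is a coupling of the distributions `μ` and `ν`. -/
def IsCoupling {X : Type*} [Fintype X] (ω : X × X → ℝ) (μ ν : X → ℝ) : Prop :=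
  IsDist ω ∧ (∀ x, ∑ y, ω (x, y) = μ x) ∧ (∀ x, ∑ y, ω (y, x) = ν x)

/-- Total variation distance: the maximum pointwise difference. -/
noncomputable def dTV {X : Type*} [Fintype X] (μ ν : X → ℝ) : ℝ :=
  ⨆ x, |μ x - ν x|

/-- The support of a (sub)distribution: points of positive probability. -/
def psupp {X : Type*} (μ : X → ℝ) : Set X := {x | 0 < μ x}

/-- Distance between functions into distributions. -/
noncomputable def dF {A B : Type*} [Fintype B] (f g : A → B → ℝ) : ℝ :=
  ⨆ a, dTV (f a) (g a)

/-- `τ` is a transition probability function on `S`. -/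
def IsTransFn {S : Type*} [Fintype S] (τ : S → S → ℝ) : Prop := ∀ s, IsDist (τ s)

/-- The diagonal `S²_Δ`. -/
def SDelta (S : Type*) : Set (S × S) := {p | p.1 = p.2}

/-- `P` is a policy for `τ` (with labelling `ℓ`). -/
def IsPolicy {S L : Type*} [Fintype S] (ℓ : S → L) (τ : S → S → ℝ)
    (P : S × S → S × S → ℝ) : Prop :=
  (∀ p, IsDist (P p)) ∧
  (∀ p : S × S, ℓ p.1 = ℓ p.2 → IsCoupling (P p) (τ p.1) (τ p.2)) ∧
  (∀ p : S × S, ℓ p.1 ≠ ℓ p.2 → psupp (P p) = {p})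

/-- A policy is `S²_Δ`-closed if the support of `P (s,s)` lies in the diagonal. -/
def DeltaClosed {S : Type*} (P : S × S → S × S → ℝ) : Prop :=
  ∀ s : S, psupp (P (s, s)) ⊆ SDelta S

/-- `d` is a `[0,1]`-valued function. -/
def Is01 {A : Type*} (d : A → ℝ) : Prop := ∀ a, 0 ≤ d a ∧ d a ≤ 1

/-- `d` is the least fixed point of `F` on the complete lattice of `[0,1]`-valued functions. -/
def IsLfpOn {A : Type*} (F : (A → ℝ) → (A → ℝ)) (d : A → ℝ) : Prop :=
  Is01 d ∧ F d = d ∧ ∀ e, Is01 e → F e = e → ∀ a, d a ≤ e a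

/-- The map `Γ_P` whose least fixed point is `γ_P`. -/
noncomputable def GammaF {S L : Type*} [Fintype S] (ℓ : S → L)
    (P : S × S → S × S → ℝ) (d : S × S → ℝ) : S × S → ℝ :=
  fun p => if ℓ p.1 ≠ ℓ p.2 then 1 else ∑ q, P p q * d q

/-- The map `Δ_τ` whose least fixed point is the probabilistic bisimilarity distance `δ_τ`. -/
noncomputable def DeltaF {S L : Type*} [Fintype S] (ℓ : S → L)
    (τ : S → S → ℝ) (d : S × S → ℝ) : S × S → ℝ :=
  fun p => if ℓ p.1 ≠ ℓ p.2 then 1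
    else sInf {r | ∃ ω, IsCoupling ω (τ p.1) (τ p.2) ∧ r = ∑ q, ω q * d q}

/-- The map whose least fixed point is `ρ_P`, the probability of reaching `S²_Δ`. -/
noncomputable def ReachF {S : Type*} [Fintype S]
    (P : S × S → S × S → ℝ) (e : S × S → ℝ) : S × S → ℝ :=
  fun p => if p.1 = p.2 then 1 else ∑ q, P p q * e q

/-- States `s` and `t` are robustly probabilistically bisimilar. -/
def Robust {S L : Type*} [Fintype S] (ℓ : S → L) (τ : S → S → ℝ) (s t : S) : Prop :=
  ∃ P ρ, IsPolicy ℓ τ P ∧ IsLfpOn (ReachF P) ρ ∧ ρ (s, t) = 1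

/-- `R` is a probabilistic bisimulation. -/
def IsBisim {S L : Type*} [Fintype S] (ℓ : S → L) (τ : S → S → ℝ)
    (R : Set (S × S)) : Prop :=
  Equivalence (fun s t => (s, t) ∈ R) ∧
  ∀ p ∈ R, ℓ p.1 = ℓ p.2 ∧ ∃ ω, IsCoupling ω (τ p.1) (τ p.2) ∧ psupp ω ⊆ R

/-- Probabilistic bisimilarity `∼`. -/
def Bisimilar {S L : Type*} [Fintype S] (ℓ : S → L) (τ : S → S → ℝ) (s t : S) : Prop :=
  ∃ R, IsBisim ℓ τ R ∧ (s, t) ∈ R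

/-- A step of a path in `⟨S×S, P⟩` supported by `R`. -/
def SupStep {S : Type*} (P : S × S → S × S → ℝ) (R : Set (S × S)) (a b : S × S) : Prop :=
  a ∈ R ∧ psupp (P a) ⊆ R ∧ 0 < P a b

/-- `R` supports a path from `p` to `S²_Δ` in `⟨S×S, P⟩`. -/
def SupportsPathToDelta {S : Type*} (P : S × S → S × S → ℝ) (R : Set (S × S))
    (p : S × S) : Prop :=
  ∃ q : S × S, q.1 = q.2 ∧ Relation.ReflTransGen (SupStep P R) p q ∧
    q ∈ R ∧ psupp (P q) ⊆ R

/-- `R` is a robust bisimulation. -/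
def IsRobustBisim {S L : Type*} [Fintype S] (ℓ : S → L) (τ : S → S → ℝ)
    (R : Set (S × S)) : Prop :=
  IsBisim ℓ τ R ∧ ∀ p ∈ R, ∃ P, IsPolicy ℓ τ P ∧ SupportsPathToDelta P R p

/-- The function `Filter` from the algorithm. -/
def FilterFn {S L : Type*} [Fintype S] (ℓ : S → L) (τ : S → S → ℝ)
    (R : Set (S × S)) : Set (S × S) :=
  {p ∈ R | ∃ P, IsPolicy ℓ τ P ∧ SupportsPathToDelta P R p}

/-- The function `Prune` from the algorithm. -/
def PruneFn {S : Type*} (Q : Set (S × S)) : Set (S × S) :=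
  {p ∈ Q | ∀ u : S, ((p.2, u) ∈ Q → (p.1, u) ∈ Q) ∧ ((u, p.1) ∈ Q → (u, p.2) ∈ Q)}

/-- `B` is the greatest probabilistic bisimulation contained in `Q` (i.e. `B = Bisim(Q)`). -/
def IsGreatestBisimIn {S L : Type*} [Fintype S] (ℓ : S → L) (τ : S → S → ℝ)
    (Q B : Set (S × S)) : Prop :=
  IsBisim ℓ τ B ∧ B ⊆ Q ∧ ∀ B', IsBisim ℓ τ B' → B' ⊆ Q → B' ⊆ B

/-- Reachability in the Markov chain `⟨S×S, P⟩`. -/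
def Reach {S : Type*} (P : S × S → S × S → ℝ) (p q : S × S) : Prop :=
  Relation.ReflTransGen (fun a b => 0 < P a b) p q

/-- `C` is a communication class of `⟨S×S, P⟩`. -/
def IsCommClass {S : Type*} (P : S × S → S × S → ℝ) (C : Set (S × S)) : Prop :=
  ∃ p, C = {q | Reach P p q ∧ Reach P q p}

/-- `C` is closed: no transition of positive probability leaves `C`. -/
def IsClosedClass {S : Type*} (P : S × S → S × S → ℝ) (C : Set (S × S)) : Prop :=
  ∀ p ∈ C, psupp (P p) ⊆ C

section TransportPlan

variable {X Y : Type*} [Fintype X] [Fintype Y]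

/-- A transport plan between mass functions `μ` on `X` and `ν` on `Y`. In contrast to
`IsCoupling`, the two spaces may differ and the total mass is arbitrary, so that the part of a
coupling that is kept and the part that is replaced are plans too. -/
structure IsPlan (ω : X × Y → ℝ) (μ : X → ℝ) (ν : Y → ℝ) : Prop where
  nonneg : 0 ≤ ω
  row_sum : ∀ x, ∑ y, ω (x, y) = μ x
  col_sum : ∀ y, ∑ x, ω (x, y) = ν y

namespace IsPlan

variable {ω κ : X × Y → ℝ} {μ μ' k : X → ℝ} {ν ν' ρ : Y → ℝ}

theorem swap (h : IsPlan ω μ ν) : IsPlan (fun p : Y × X => ω p.swap) ν μ :=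
  ⟨fun _ => h.nonneg _, h.col_sum, h.row_sum⟩

theorem sum_eq_left (h : IsPlan ω μ ν) : ∑ p, ω p = ∑ x, μ x := by
  simp only [Fintype.sum_prod_type, h.row_sum]

theorem sum_eq_right (h : IsPlan ω μ ν) : ∑ p, ω p = ∑ y, ν y := by
  simp only [Fintype.sum_prod_type_right, h.col_sum]

theorem left_nonneg (h : IsPlan ω μ ν) : 0 ≤ μ := fun x =>
  h.row_sum x ▸ Finset.sum_nonneg fun y _ => h.nonneg (x, y)

theorem right_nonneg (h : IsPlan ω μ ν) : 0 ≤ ν := h.swap.left_nonneg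

theorem apply_le_left (h : IsPlan ω μ ν) (x : X) (y : Y) : ω (x, y) ≤ μ x :=
  h.row_sum x ▸
    Finset.single_le_sum (f := fun y => ω (x, y)) (fun _ _ => h.nonneg _) (Finset.mem_univ y)

theorem add (hω : IsPlan ω μ ν) (hκ : IsPlan κ k ρ) : IsPlan (ω + κ) (μ + k) (ν + ρ) where
  nonneg := add_nonneg hω.nonneg hκ.nonneg
  row_sum x := by simp only [Pi.add_apply, Finset.sum_add_distrib, hω.row_sum, hκ.row_sum]
  col_sum y := by simp only [Pi.add_apply, Finset.sum_add_distrib, hω.col_sum, hκ.col_sum]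

theorem sub (hω : IsPlan ω μ ν) (hκ : IsPlan κ k ρ) (hle : κ ≤ ω) :
    IsPlan (ω - κ) (μ - k) (ν - ρ) where
  nonneg := sub_nonneg.2 hle
  row_sum x := by simp only [Pi.sub_apply, Finset.sum_sub_distrib, hω.row_sum, hκ.row_sum]
  col_sum y := by simp only [Pi.sub_apply, Finset.sum_sub_distrib, hω.col_sum, hκ.col_sum]

theorem exists_of_sum_eq (hμ : 0 ≤ μ) (hν : 0 ≤ ν) (hsum : ∑ x, μ x = ∑ y, ν y) :
    ∃ ω, IsPlan ω μ ν := by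
  have hμ0 (h : ∑ y, ν y = 0) (x : X) : μ x = 0 :=
    (Finset.sum_eq_zero_iff_of_nonneg fun x _ => hμ x).1 (hsum.trans h) x (Finset.mem_univ x)
  have hν0 (h : ∑ y, ν y = 0) (y : Y) : ν y = 0 :=
    (Finset.sum_eq_zero_iff_of_nonneg fun y _ => hν y).1 h y (Finset.mem_univ y)
  -- Division by zero makes this the zero plan when the total mass vanishes, as it should be.
  refine ⟨fun p => μ p.1 * ν p.2 / ∑ y, ν y, ⟨fun p => ?_, fun x => ?_, fun y => ?_⟩⟩
  · exact div_nonneg (mul_nonneg (hμ _) (hν _)) (Finset.sum_nonneg fun y _ => hν y)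
  · simp only [← Finset.sum_div, ← Finset.mul_sum]
    exact mul_div_cancel_of_imp fun h => hμ0 h x
  · simp only [← Finset.sum_div, ← Finset.sum_mul, hsum]
    exact mul_div_cancel_left_of_imp fun h => hν0 h y

theorem exists_le_of_le_left (hω : IsPlan ω μ ν) (hk : 0 ≤ k) (hkμ : k ≤ μ) :
    ∃ κ ρ, IsPlan κ k ρ ∧ κ ≤ ω := by
  refine ⟨fun p => k p.1 / μ p.1 * ω p, fun y => ∑ x, k x / μ x * ω (x, y),
    ⟨fun p => ?_, fun x => ?_, fun _ => rfl⟩, fun p => ?_⟩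
  · exact mul_nonneg (div_nonneg (hk _) ((hk _).trans (hkμ _))) (hω.nonneg p)
  · have hkx (h : μ x = 0) : k x = 0 := le_antisymm (h ▸ hkμ x) (hk x)
    simp only [← Finset.mul_sum, hω.row_sum]
    exact div_mul_cancel_of_imp hkx
  · exact mul_le_of_le_one_left (hω.nonneg p)
      (div_le_one_of_le₀ (hkμ _) ((hk _).trans (hkμ _)))

theorem exists_abs_sub_le_left (hω : IsPlan ω μ ν) (hμ' : 0 ≤ μ')
    (hsum : ∑ x, μ x = ∑ x, μ' x) :
    ∃ ω', IsPlan ω' μ' ν ∧ ∀ x y, |ω (x, y) - ω' (x, y)| ≤ |μ x - μ' x| := by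
  obtain ⟨κ, ρ, hκ, hκω⟩ := hω.exists_le_of_le_left (le_inf hω.left_nonneg hμ') inf_le_left
  have hremoved : IsPlan (ω - κ) (μ - μ ⊓ μ') (ν - ρ) := hω.sub hκ hκω
  have hdeficit : ∑ x, (μ' - μ ⊓ μ') x = ∑ y, (ν - ρ) y := by
    rw [← hremoved.sum_eq_right, hremoved.sum_eq_left]
    simp only [Pi.sub_apply, Finset.sum_sub_distrib, hsum]
  obtain ⟨η, hη⟩ :=
    exists_of_sum_eq (sub_nonneg.2 inf_le_right) hremoved.right_nonneg hdeficit
  refine ⟨κ + η, by simpa only [add_sub_cancel] using hκ.add hη, fun x y => ?_⟩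
  have hmass : max (μ x) (μ' x) - min (μ x) (μ' x) = |μ x - μ' x| :=
    max_sub_min_eq_abs' _ _
  have hremoved_le : (ω - κ) (x, y) ≤ |μ x - μ' x| :=
    (hremoved.apply_le_left x y).trans (hmass ▸ sub_le_sub_right (le_max_left _ _) _)
  have hadded_le : η (x, y) ≤ |μ x - μ' x| :=
    (hη.apply_le_left x y).trans (hmass ▸ sub_le_sub_right (le_max_right _ _) _)
  rw [Pi.add_apply, ← sub_sub]
  exact abs_sub_le_of_nonneg_of_le (hremoved.nonneg _) hremoved_le (hη.nonneg _) hadded_le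

theorem exists_abs_sub_le (hω : IsPlan ω μ ν) (hμ' : 0 ≤ μ') (hν' : 0 ≤ ν')
    (hμsum : ∑ x, μ x = ∑ x, μ' x) (hνsum : ∑ y, ν y = ∑ y, ν' y) :
    ∃ ω', IsPlan ω' μ' ν' ∧
      ∀ x y, |ω (x, y) - ω' (x, y)| ≤ |μ x - μ' x| + |ν y - ν' y| := by
  obtain ⟨ω₁, hω₁, hleft⟩ := hω.exists_abs_sub_le_left hμ' hμsum
  obtain ⟨ω₂, hω₂, hright⟩ := hω₁.swap.exists_abs_sub_le_left hν' hνsum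
  exact ⟨_, hω₂.swap, fun x y =>
    (abs_sub_le _ (ω₁ (x, y)) _).trans (add_le_add (hleft x y) (hright y x))⟩

end IsPlan

end TransportPlan

section Distance

variable {A X : Type*} [Fintype X]

theorem abs_sub_le_dTV (μ ν : X → ℝ) (x : X) : |μ x - ν x| ≤ dTV μ ν :=
  Finite.le_ciSup (fun x => |μ x - ν x|) x

theorem dTV_nonneg (μ ν : X → ℝ) : 0 ≤ dTV μ ν :=
  Real.iSup_nonneg fun _ => abs_nonneg _

theorem dTV_le {μ ν : X → ℝ} {c : ℝ} (hc : 0 ≤ c) (h : ∀ x, |μ x - ν x| ≤ c) : dTV μ ν ≤ c :=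
  Real.iSup_le h hc

theorem dTV_self (μ : X → ℝ) : dTV μ μ = 0 :=
  le_antisymm (dTV_le le_rfl fun x => by simp) (dTV_nonneg μ μ)

theorem dTV_le_dF [Finite A] (f g : A → X → ℝ) (a : A) : dTV (f a) (g a) ≤ dF f g :=
  Finite.le_ciSup (fun a => dTV (f a) (g a)) a

end Distance

section Coupling

variable {X : Type*}

/-- The law of `(x, x)` for `x` drawn from `μ`: the coupling of `μ` with itself that a
diagonal-closed policy has to use at the pairs `(s, s)`. -/
noncomputable def diagonalCoupling (μ : X → ℝ) (p : X × X) : ℝ :=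
  if p.1 = p.2 then μ p.1 else 0

theorem psupp_diagonalCoupling_subset (μ : X → ℝ) : psupp (diagonalCoupling μ) ⊆ SDelta X := by
  intro p (hpos : 0 < diagonalCoupling μ p)
  by_contra hne
  exact hpos.ne' (if_neg hne)

variable [Fintype X] {ω : X × X → ℝ} {μ ν μ' ν' : X → ℝ}

theorem isCoupling_iff : IsCoupling ω μ ν ↔ IsPlan ω μ ν ∧ ∑ p, ω p = 1 :=
  ⟨fun ⟨hω, hrow, hcol⟩ => ⟨⟨hω.1, hrow, hcol⟩, hω.2⟩,
    fun ⟨hω, hsum⟩ => ⟨⟨hω.nonneg, hsum⟩, hω.row_sum, hω.col_sum⟩⟩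

theorem IsCoupling.exists_dTV_le (hω : IsCoupling ω μ ν) (hμ' : IsDist μ') (hν' : IsDist ν') :
    ∃ ω', IsCoupling ω' μ' ν' ∧ dTV ω ω' ≤ dTV μ μ' + dTV ν ν' := by
  obtain ⟨hplan, hone⟩ := isCoupling_iff.1 hω
  obtain ⟨ω', hω', hle⟩ := hplan.exists_abs_sub_le hμ'.1 hν'.1
    (by rw [← hplan.sum_eq_left, hone, hμ'.2]) (by rw [← hplan.sum_eq_right, hone, hν'.2])
  refine ⟨ω', isCoupling_iff.2 ⟨hω', hω'.sum_eq_left.trans hμ'.2⟩, ?_⟩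
  exact dTV_le (add_nonneg (dTV_nonneg _ _) (dTV_nonneg _ _)) fun p =>
    (hle p.1 p.2).trans (add_le_add (abs_sub_le_dTV _ _ _) (abs_sub_le_dTV _ _ _))

theorem isCoupling_diagonalCoupling (hμ : IsDist μ) : IsCoupling (diagonalCoupling μ) μ μ := by
  have hplan : IsPlan (diagonalCoupling μ) μ μ :=
    ⟨fun _ => ite_nonneg (hμ.1 _) le_rfl, fun x => by simp [diagonalCoupling],
      fun y => by simp [diagonalCoupling]⟩
  exact isCoupling_iff.2 ⟨hplan, hplan.sum_eq_left.trans hμ.2⟩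

theorem IsCoupling.eq_diagonalCoupling (hω : IsCoupling ω μ ν) (hsupp : psupp ω ⊆ SDelta X) :
    ω = diagonalCoupling μ := by
  have hoff (x y : X) (hxy : x ≠ y) : ω (x, y) = 0 :=
    le_antisymm (not_lt.1 fun hpos => hxy (hsupp hpos)) (hω.1.1 _)
  ext ⟨x, y⟩
  obtain rfl | hxy := eq_or_ne x y
  · have hrow : ∑ y, ω (x, y) = ω (x, x) := Fintype.sum_eq_single x fun y hy => hoff x y hy.symm
    rw [← hrow, hω.2.1, diagonalCoupling, if_pos rfl]
  · rw [hoff x y hxy, diagonalCoupling, if_neg hxy]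

theorem dTV_diagonalCoupling_le (μ ν : X → ℝ) :
    dTV (diagonalCoupling μ) (diagonalCoupling ν) ≤ dTV μ ν := by
  refine dTV_le (dTV_nonneg μ ν) fun p => ?_
  by_cases hp : p.1 = p.2
  · simpa only [diagonalCoupling, if_pos hp] using abs_sub_le_dTV μ ν p.1
  · simpa only [diagonalCoupling, if_neg hp, sub_self, abs_zero] using dTV_nonneg μ ν

end Coupling

section Policy

variable {S L : Type*} [Fintype S] {ℓ : S → L} {σ τ : S → S → ℝ} {P : S × S → S × S → ℝ}

theorem IsPolicy.exists_isCoupling_dTV_le (hP : IsPolicy ℓ σ P) (hPc : DeltaClosed P)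
    (hτ : IsTransFn τ) {s t : S} (hst : ℓ s = ℓ t) :
    ∃ ω, IsCoupling ω (τ s) (τ t) ∧ (s = t → psupp ω ⊆ SDelta S) ∧
      dTV (P (s, t)) ω ≤ dTV (σ s) (τ s) + dTV (σ t) (τ t) := by
  have hcoupling : IsCoupling (P (s, t)) (σ s) (σ t) := hP.2.1 (s, t) hst
  obtain rfl | hne := eq_or_ne s t
  · refine ⟨diagonalCoupling (τ s), isCoupling_diagonalCoupling (hτ s),
      fun _ => psupp_diagonalCoupling_subset (τ s), ?_⟩
    rw [hcoupling.eq_diagonalCoupling (hPc s)]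
    exact (dTV_diagonalCoupling_le (σ s) (τ s)).trans (le_add_of_nonneg_left (dTV_nonneg _ _))
  · obtain ⟨ω, hω, hle⟩ := hcoupling.exists_dTV_le (hτ s) (hτ t)
    exact ⟨ω, hω, fun h => absurd h hne, hle⟩

theorem policy_Lipschitz_general (hτ : IsTransFn τ) (hP : IsPolicy ℓ σ P)
    (hPc : DeltaClosed P) :
    ∃ Q : S × S → S × S → ℝ, IsPolicy ℓ τ Q ∧ DeltaClosed Q ∧
      ∀ s t, dTV (P (s, t)) (Q (s, t)) ≤ dTV (σ s) (τ s) + dTV (σ t) (τ t) := by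
  choose! R hR hRdiag hRle using fun (p : S × S) (h : ℓ p.1 = ℓ p.2) =>
    hP.exists_isCoupling_dTV_le hPc hτ h
  let Q (p : S × S) : S × S → ℝ := if ℓ p.1 = ℓ p.2 then R p else P p
  have hQ_eq {p : S × S} (h : ℓ p.1 = ℓ p.2) : Q p = R p := if_pos h
  have hQ_ne {p : S × S} (h : ℓ p.1 ≠ ℓ p.2) : Q p = P p := if_neg h
  have hQ : IsPolicy ℓ τ Q := by
    refine ⟨fun p => ?_, fun p h => hQ_eq h ▸ hR p h, fun p h => hQ_ne h ▸ hP.2.2 p h⟩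
    by_cases h : ℓ p.1 = ℓ p.2
    · exact hQ_eq h ▸ (hR p h).1
    · exact hQ_ne h ▸ hP.1 p
  refine ⟨Q, hQ, fun s => hQ_eq (p := (s, s)) rfl ▸ hRdiag (s, s) rfl rfl, fun s t => ?_⟩
  by_cases h : ℓ s = ℓ t
  · exact hQ_eq (p := (s, t)) h ▸ hRle (s, t) h
  · rw [hQ_ne (p := (s, t)) h, dTV_self]
    exact add_nonneg (dTV_nonneg _ _) (dTV_nonneg _ _)

end Policy

/-- Proposition 12: for every `S²_Δ`-closed policy `P` for `σ` there is an `S²_Δ`-closed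
policy `Q` for `τ` with `d_F(P,Q) ≤ 2 · d_F(σ,τ)`. -/
theorem policy_Lipschitz {S L : Type*} [Fintype S] [Nonempty S] [Fintype L]
    (ℓ : S → L) (hℓ : ∃ a b : S, ℓ a ≠ ℓ b)
    (σ τ : S → S → ℝ) (hσ : IsTransFn σ) (hτ : IsTransFn τ)
    (P : S × S → S × S → ℝ) (hP : IsPolicy ℓ σ P) (hPc : DeltaClosed P) :
    ∃ Q : S × S → S × S → ℝ,
      IsPolicy ℓ τ Q ∧ DeltaClosed Q ∧ dF P Q ≤ 2 * dF σ τ := by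
  obtain ⟨Q, hQ, hQc, hle⟩ := policy_Lipschitz_general hτ hP hPc
  exact ⟨Q, hQ, hQc, ciSup_le fun ⟨s, t⟩ => (hle s t).trans
    ((add_le_add (dTV_le_dF σ τ s) (dTV_le_dF σ τ t)).trans_eq (two_mul _).symm)⟩
end

section
/- Fix a labelled Markov chain ⟨S, L, τ, ℓ⟩. Robust probabilistic bisimilarity ≃ is a probabilistic bisimulation: it is an equivalence relation on S, and for all (s,t) with s ≃ t, ℓ(s) = ℓ(t) and there exists ω ∈ Ω(τ(s),τ(t)) with support(ω) ⊆ ≃. -/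
open Finset Filter
open scoped Classical

/-!
Call a set of pairs containing the diagonal *coalescing* if it respects labels and if, from each of
its pairs, the diagonal can be reached by steps of couplings supported in the set. Two states are
robustly bisimilar iff some coalescing set contains them.

If `ρ_P` is the reachability probability of a policy `P`, then `{ρ_P = 1}` is coalescing, since `1`
is the maximum of `ρ_P` and can only be averaged from the value `1`. Conversely, for a coalescing
set `R`, couplings of greatest support in `R` yield a single policy that admits every step available
inside `R`; the minimum of `ρ_P` on `R` propagates along a path to the diagonal, so it equals `1`.

Coalescing sets are closed under inversion and, by gluing couplings along the middle state, under
composition: first drive `(x, y)` to the diagonal while `z` follows `y`; once `x` and `y` have met,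
continue inside the second set.
-/

lemma psupp_single {X : Type*} [DecidableEq X] (x : X) : psupp (Pi.single x 1 : X → ℝ) = {x} := by
  ext y
  by_cases hy : y = x <;> simp [psupp, Pi.single_apply, hy]

section Distributions

variable {X : Type*} [Fintype X] {μ : X → ℝ}

lemma IsDist.eq_zero_of_notMem_psupp (hμ : IsDist μ) {x : X} (hx : x ∉ psupp μ) : μ x = 0 :=
  le_antisymm (not_lt.1 hx) (hμ.1 x)

lemma IsDist.eq_of_sum_mul_eq (hμ : IsDist μ) {f : X → ℝ} {c : ℝ} (hle : ∀ x ∈ psupp μ, c ≤ f x)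
    (hsum : ∑ x, μ x * f x = c) {x : X} (hx : x ∈ psupp μ) : f x = c := by
  have hterm : ∀ y ∈ univ, μ y * c ≤ μ y * f y := fun y _ ↦ by
    by_cases hy : y ∈ psupp μ
    · exact mul_le_mul_of_nonneg_left (hle y hy) (hμ.1 y)
    · simp [hμ.eq_zero_of_notMem_psupp hy]
  have hsums : ∑ y, μ y * c = ∑ y, μ y * f y := by rw [hsum, ← sum_mul, hμ.2, one_mul]
  exact (mul_left_cancel₀ (ne_of_gt hx)
    ((sum_eq_sum_iff_of_le hterm).1 hsums x (mem_univ x))).symm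

lemma isDist_single [DecidableEq X] (x : X) : IsDist (Pi.single x 1 : X → ℝ) :=
  ⟨fun _ ↦ (Pi.single_nonneg.2 zero_le_one : (0 : X → ℝ) ≤ Pi.single x 1) _, by simp⟩

end Distributions

section Couplings

variable {X : Type*} [Fintype X] {ω ω' : X × X → ℝ} {μ ν κ : X → ℝ}

lemma isCoupling_of_marginals (hμ : IsDist μ) (hω : ∀ q, 0 ≤ ω q)
    (hfst : ∀ x, ∑ y, ω (x, y) = μ x) (hsnd : ∀ y, ∑ x, ω (x, y) = ν y) : IsCoupling ω μ ν :=
  ⟨⟨hω, by simp only [Fintype.sum_prod_type, hfst, hμ.2]⟩, hfst, hsnd⟩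

lemma isCoupling_prod (hμ : IsDist μ) (hν : IsDist ν) :
    IsCoupling (fun q ↦ μ q.1 * ν q.2) μ ν :=
  isCoupling_of_marginals hμ (fun q ↦ mul_nonneg (hμ.1 q.1) (hν.1 q.2))
    (fun x ↦ by simp only [← mul_sum, hν.2, mul_one])
    (fun y ↦ by simp only [← sum_mul, hμ.2, one_mul])

lemma IsDist.exists_isCoupling_psupp_subset_SDelta (hμ : IsDist μ) :
    ∃ ω, IsCoupling ω μ μ ∧ psupp ω ⊆ SDelta X := by
  refine ⟨fun q ↦ if q.1 = q.2 then μ q.1 else 0,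
    isCoupling_of_marginals hμ (fun q ↦ ?_) (fun x ↦ by simp) (fun y ↦ by simp), fun q hq ↦ ?_⟩
  · split_ifs
    exacts [hμ.1 q.1, le_rfl]
  · by_contra hne
    exact (lt_irrefl (0 : ℝ)) (hq.trans_eq (if_neg hne))

namespace IsCoupling

lemma isDist_fst (h : IsCoupling ω μ ν) : IsDist μ :=
  ⟨fun x ↦ h.2.1 x ▸ sum_nonneg fun y _ ↦ h.1.1 (x, y), by
    simp only [← h.2.1, ← Fintype.sum_prod_type, h.1.2]⟩

lemma swap (h : IsCoupling ω μ ν) : IsCoupling (fun q ↦ ω q.swap) ν μ :=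
  ⟨⟨fun q ↦ h.1.1 q.swap, ((Equiv.prodComm X X).sum_comp ω).trans h.1.2⟩, h.2.2, h.2.1⟩

lemma apply_le_fst (h : IsCoupling ω μ ν) (x y : X) : ω (x, y) ≤ μ x :=
  h.2.1 x ▸ single_le_sum (f := fun b ↦ ω (x, b)) (fun b _ ↦ h.1.1 (x, b)) (mem_univ y)

lemma apply_le_snd (h : IsCoupling ω μ ν) (x y : X) : ω (x, y) ≤ ν y :=
  h.swap.apply_le_fst y x

lemma exists_pos_of_fst_pos (h : IsCoupling ω μ ν) {x : X} (hx : 0 < μ x) :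
    ∃ y, 0 < ω (x, y) := by
  rw [← h.2.1 x, sum_pos_iff_of_nonneg fun y _ ↦ h.1.1 (x, y)] at hx
  simpa only [mem_univ, true_and] using hx

lemma midpoint (h : IsCoupling ω μ ν) (h' : IsCoupling ω' μ ν) :
    IsCoupling (fun q ↦ (ω q + ω' q) / 2) μ ν :=
  isCoupling_of_marginals h.isDist_fst
    (fun q ↦ div_nonneg (add_nonneg (h.1.1 q) (h'.1.1 q)) zero_le_two)
    (fun x ↦ by rw [← sum_div, sum_add_distrib, h.2.1, h'.2.1, add_self_div_two])
    (fun y ↦ by rw [← sum_div, sum_add_distrib, h.2.2, h'.2.2, add_self_div_two])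

lemma psupp_midpoint (h : IsCoupling ω μ ν) (h' : IsCoupling ω' μ ν) :
    psupp (fun q ↦ (ω q + ω' q) / 2) = psupp ω ∪ psupp ω' := by
  ext q
  have hq := h.1.1 q
  have hq' := h'.1.1 q
  constructor
  · intro hpos
    by_contra! hnot
    simp only [psupp, Set.mem_union, Set.mem_ofPred_eq, not_or, not_lt] at hpos hnot
    linarith
  · rintro (hpos | hpos) <;> simp only [psupp, Set.mem_ofPred_eq] at hpos ⊢ <;> linarith

lemma exists_greatest_psupp {R : Set (X × X)} (h : IsCoupling ω μ ν) (hR : psupp ω ⊆ R) :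
    ∃ η, IsCoupling η μ ν ∧ psupp η ⊆ R ∧
      ∀ η', IsCoupling η' μ ν → psupp η' ⊆ R → psupp η' ⊆ psupp η := by
  obtain ⟨_, ⟨η, ⟨hη, hηR⟩, rfl⟩, hmax⟩ :=
    (Set.toFinite (psupp '' {η | IsCoupling η μ ν ∧ psupp η ⊆ R})).exists_maximal
      ⟨_, ω, ⟨h, hR⟩, rfl⟩
  refine ⟨η, hη, hηR, fun η' hη' hη'R ↦ ?_⟩
  have hunion := hη.psupp_midpoint hη'
  exact Set.subset_union_right.trans <|
    hmax ⟨_, ⟨hη.midpoint hη', hunion.trans_subset (Set.union_subset hηR hη'R)⟩, hunion⟩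
      Set.subset_union_left

end IsCoupling

/-- The gluing of couplings `ω` of `(μ, ν)` and `ω'` of `(ν, κ)` along their common marginal `ν`:
the outer coordinates are drawn independently given the middle one. Points `y` with `ν y = 0`
contribute `0` because of division by zero. -/
noncomputable def glue (ω ω' : X × X → ℝ) (ν : X → ℝ) : X × X → ℝ :=
  fun q ↦ ∑ y, ω (q.1, y) * ω' (y, q.2) / ν y

lemma glue_swap (ω ω' : X × X → ℝ) (ν : X → ℝ) (q : X × X) :
    glue (fun p ↦ ω' p.swap) (fun p ↦ ω p.swap) ν q = glue ω ω' ν q.swap := by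
  simp only [glue, Prod.swap, mul_comm]

namespace IsCoupling

lemma glue_summand_nonneg (h : IsCoupling ω μ ν) (h' : IsCoupling ω' ν κ) (x y z : X) :
    0 ≤ ω (x, y) * ω' (y, z) / ν y :=
  div_nonneg (mul_nonneg (h.1.1 (x, y)) (h'.1.1 (y, z))) (h'.isDist_fst.1 y)

lemma sum_glue_fst (h : IsCoupling ω μ ν) (h' : IsCoupling ω' ν κ) (x : X) :
    ∑ z, glue ω ω' ν (x, z) = μ x := by
  have hzero (y : X) (hy : ν y = 0) : ω (x, y) = 0 :=
    le_antisymm (hy ▸ h.apply_le_snd x y) (h.1.1 (x, y))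
  calc ∑ z, glue ω ω' ν (x, z)
      = ∑ y, ω (x, y) * (∑ z, ω' (y, z)) / ν y := by
        simp only [glue, mul_sum, sum_div]
        exact sum_comm
    _ = ∑ y, ω (x, y) := sum_congr rfl fun y _ ↦ by
        rw [h'.2.1, mul_div_cancel_of_imp (hzero y)]
    _ = μ x := h.2.1 x

lemma isCoupling_glue (h : IsCoupling ω μ ν) (h' : IsCoupling ω' ν κ) :
    IsCoupling (glue ω ω' ν) μ κ :=
  isCoupling_of_marginals h.isDist_fst
    (fun q ↦ sum_nonneg fun y _ ↦ h.glue_summand_nonneg h' q.1 y q.2)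
    (h.sum_glue_fst h')
    (fun z ↦ by
      simpa only [glue_swap, Prod.swap_prod_mk] using h'.swap.sum_glue_fst h.swap z)

lemma psupp_glue (h : IsCoupling ω μ ν) (h' : IsCoupling ω' ν κ) :
    psupp (glue ω ω' ν) = SetRel.comp (psupp ω) (psupp ω') := by
  ext ⟨x, z⟩
  have hsummand (y : X) :
      0 < ω (x, y) * ω' (y, z) / ν y ↔ 0 < ω (x, y) ∧ 0 < ω' (y, z) := by
    constructor
    · intro hpos
      exact ⟨(h.1.1 _).lt_of_ne' fun h0 ↦ by simp [h0] at hpos,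
        (h'.1.1 _).lt_of_ne' fun h0 ↦ by simp [h0] at hpos⟩
    · rintro ⟨hxy, hyz⟩
      exact div_pos (mul_pos hxy hyz) (hxy.trans_le (h.apply_le_snd x y))
  simp only [psupp, glue, SetRel.comp, Set.mem_ofPred_eq,
    sum_pos_iff_of_nonneg fun y _ ↦ h.glue_summand_nonneg h' x y z, mem_univ, true_and, hsummand]

end IsCoupling

end Couplings

section LeastFixedPoint

variable {A : Type*} {F : (A → ℝ) → (A → ℝ)}

lemma exists_isLfpOn_forall_le (hmono : MonotoneOn F {d | Is01 d})
    (hmaps : Set.MapsTo F {d | Is01 d} {d | Is01 d}) :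
    ∃ ρ, IsLfpOn F ρ ∧ ∀ e, Is01 e → F e ≤ e → ρ ≤ e := by
  have h01 (d : A → Set.Icc (0 : ℝ) 1) : Is01 fun a ↦ (d a : ℝ) := fun a ↦ (d a).2
  let G : (A → Set.Icc (0 : ℝ) 1) →o (A → Set.Icc (0 : ℝ) 1) :=
    { toFun := fun d a ↦ ⟨F (fun b ↦ d b) a, hmaps (h01 d) a⟩
      monotone' := fun d e hde ↦ hmono (h01 d) (h01 e) hde }
  have hleast (e : A → ℝ) (he : Is01 e) (hFe : F e ≤ e) : (fun a ↦ (G.lfp a : ℝ)) ≤ e :=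
    G.lfp_le (a := fun a ↦ ⟨e a, he a⟩) hFe
  have hfix : F (fun a ↦ G.lfp a) = fun a ↦ (G.lfp a : ℝ) :=
    congrArg (fun d a ↦ (d a : ℝ)) G.map_lfp
  exact ⟨fun a ↦ G.lfp a, ⟨h01 _, hfix, fun e he hFe ↦ hleast e he hFe.le⟩, hleast⟩

lemma IsLfpOn.le_of_map_le (hmono : MonotoneOn F {d | Is01 d})
    (hmaps : Set.MapsTo F {d | Is01 d} {d | Is01 d}) {ρ e : A → ℝ} (hρ : IsLfpOn F ρ)
    (he : Is01 e) (hFe : F e ≤ e) : ρ ≤ e := by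
  obtain ⟨ρ', hρ', hleast⟩ := exists_isLfpOn_forall_le hmono hmaps
  exact le_trans (hρ.2.2 ρ' hρ'.1 hρ'.2.1) (hleast e he hFe)

end LeastFixedPoint

section Reachability

variable {S : Type*} [Fintype S] {P : S × S → S × S → ℝ}

lemma reachF_of_mem_SDelta {p : S × S} (hp : p ∈ SDelta S) (e : S × S → ℝ) : ReachF P e p = 1 :=
  if_pos hp

lemma reachF_of_notMem_SDelta {p : S × S} (hp : p ∉ SDelta S) (e : S × S → ℝ) :
    ReachF P e p = ∑ q, P p q * e q :=
  if_neg hp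

lemma monotone_reachF (hP : ∀ p q, 0 ≤ P p q) : Monotone (ReachF P) := by
  intro d e hde p
  by_cases hp : p ∈ SDelta S
  · simp only [reachF_of_mem_SDelta hp, le_refl]
  · simp only [reachF_of_notMem_SDelta hp]
    exact sum_le_sum fun q _ ↦ mul_le_mul_of_nonneg_left (hde q) (hP p q)

lemma mapsTo_reachF (hP : ∀ p, IsDist (P p)) :
    Set.MapsTo (ReachF P) {d | Is01 d} {d | Is01 d} := by
  intro d hd p
  by_cases hp : p ∈ SDelta S
  · simp only [reachF_of_mem_SDelta hp, zero_le_one, le_refl, and_self]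
  · rw [reachF_of_notMem_SDelta hp]
    refine ⟨sum_nonneg fun q _ ↦ mul_nonneg ((hP p).1 q) (hd q).1, ?_⟩
    calc ∑ q, P p q * d q ≤ ∑ q, P p q :=
          sum_le_sum fun q _ ↦ mul_le_of_le_one_right ((hP p).1 q) (hd q).2
      _ = 1 := (hP p).2

lemma exists_isLfpOn_reachF (hP : ∀ p, IsDist (P p)) : ∃ ρ, IsLfpOn (ReachF P) ρ :=
  (exists_isLfpOn_forall_le ((monotone_reachF fun p ↦ (hP p).1).monotoneOn _)
    (mapsTo_reachF hP)).imp fun _ ↦ And.left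

lemma eq_one_of_reachF_eq_self_of_mem_SDelta {e : S × S → ℝ} (he : ReachF P e = e) {p : S × S}
    (hp : p ∈ SDelta S) : e p = 1 := by
  rw [← he, reachF_of_mem_SDelta hp]

lemma sum_mul_eq_of_reachF_eq_self_of_notMem_SDelta {e : S × S → ℝ} (he : ReachF P e = e)
    {p : S × S} (hp : p ∉ SDelta S) : ∑ q, P p q * e q = e p := by
  rw [← reachF_of_notMem_SDelta hp, he]

lemma eq_one_of_reachF_eq_self_of_mem_psupp {e : S × S → ℝ} (he : ReachF P e = e)
    (hle : ∀ q, e q ≤ 1) {p q : S × S} (hP : IsDist (P p)) (hp : e p = 1) (hpΔ : p ∉ SDelta S)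
    (hq : q ∈ psupp (P p)) : e q = 1 := by
  have hsum : ∑ r, P p r * -e r = -1 := by
    rw [← hp, ← sum_mul_eq_of_reachF_eq_self_of_notMem_SDelta he hpΔ]
    simp only [mul_neg, sum_neg_distrib]
  exact neg_injective (hP.eq_of_sum_mul_eq (fun r _ ↦ neg_le_neg (hle r)) hsum hq)

lemma IsLfpOn.exists_reach_SDelta (hP : ∀ p, IsDist (P p)) {ρ : S × S → ℝ}
    (hρ : IsLfpOn (ReachF P) ρ) {p : S × S} (hp : 0 < ρ p) : ∃ d ∈ SDelta S, Reach P p d := by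
  let B : Set (S × S) := {q | ∃ d ∈ SDelta S, Reach P q d}
  have hB : Is01 (B.indicator 1 : S × S → ℝ) := fun q ↦ by
    by_cases hq : q ∈ B <;> simp [hq]
  have hpre : ReachF P (B.indicator 1) ≤ B.indicator 1 := fun q ↦ by
    by_cases hq : q ∈ B
    · rw [Set.indicator_of_mem hq]
      exact (mapsTo_reachF hP hB q).2
    · have hqΔ : q ∉ SDelta S := fun hqΔ ↦ hq ⟨q, hqΔ, .refl⟩
      rw [reachF_of_notMem_SDelta hqΔ, Set.indicator_of_notMem hq]
      refine (sum_eq_zero fun r _ ↦ ?_).le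
      by_cases hr : r ∈ psupp (P q)
      · have hrB : r ∉ B := fun ⟨d, hd, hrd⟩ ↦ hq ⟨d, hd, hrd.head hr⟩
        rw [Set.indicator_of_notMem hrB, mul_zero]
      · rw [(hP q).eq_zero_of_notMem_psupp hr, zero_mul]
  by_contra! hnot
  have hpB : p ∉ B := fun ⟨d, hd, hpd⟩ ↦ hnot d hd hpd
  have hle : ρ p ≤ B.indicator 1 p :=
    hρ.le_of_map_le ((monotone_reachF fun p ↦ (hP p).1).monotoneOn _) (mapsTo_reachF hP) hB hpre p
  rw [Set.indicator_of_notMem hpB] at hle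
  exact hle.not_gt hp

lemma one_le_of_reachF_eq_self_of_isMinOn (hP : ∀ p, IsDist (P p)) {e : S × S → ℝ}
    (he : ReachF P e = e) {R : Set (S × S)} (hR : IsClosedClass P R) {p d : S × S}
    (hpd : Reach P p d) (hd : d ∈ SDelta S) (hp : p ∈ R) (hmin : IsMinOn e R p) : 1 ≤ e p := by
  induction hpd using Relation.ReflTransGen.head_induction_on with
  | refl => exact (eq_one_of_reachF_eq_self_of_mem_SDelta he hd).ge
  | @head a b hab _ ih =>
    by_cases ha : a ∈ SDelta S
    · exact (eq_one_of_reachF_eq_self_of_mem_SDelta he ha).ge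
    · have hba : e b = e a := (hP a).eq_of_sum_mul_eq (fun q hq ↦ hmin (hR a hp hq))
        (sum_mul_eq_of_reachF_eq_self_of_notMem_SDelta he ha) hab
      rw [← hba]
      exact ih (hR a hp hab) fun q hq ↦ hba.trans_le (hmin hq)

lemma one_le_of_reachF_eq_self_of_isClosedClass (hP : ∀ p, IsDist (P p)) {e : S × S → ℝ}
    (he : ReachF P e = e) {R : Set (S × S)} (hR : IsClosedClass P R)
    (hreach : ∀ p ∈ R, ∃ d ∈ SDelta S, Reach P p d) {p : S × S} (hp : p ∈ R) : 1 ≤ e p := by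
  obtain ⟨m, hmR, hmin⟩ := R.exists_min_image e R.toFinite ⟨p, hp⟩
  obtain ⟨d, hd, hmd⟩ := hreach m hmR
  exact (one_le_of_reachF_eq_self_of_isMinOn hP he hR hmd hd hmR hmin).trans (hmin p hp)

end Reachability

section Policies

variable {S L : Type*} [Fintype S] {ℓ : S → L} {τ : S → S → ℝ}

lemma exists_isPolicy_of_forall_exists {Q : S × S → (S × S → ℝ) → Prop}
    (h : ∀ p : S × S, ℓ p.1 = ℓ p.2 → ∃ ω, IsCoupling ω (τ p.1) (τ p.2) ∧ Q p ω) :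
    ∃ P, IsPolicy ℓ τ P ∧ ∀ p : S × S, ℓ p.1 = ℓ p.2 → Q p (P p) := by
  choose ω hω hQ using h
  refine ⟨fun p ↦ if hp : ℓ p.1 = ℓ p.2 then ω p hp else Pi.single p 1,
    ⟨fun p ↦ ?_, fun p hp ↦ ?_, fun p hp ↦ ?_⟩, fun p hp ↦ ?_⟩
  · dsimp only
    split_ifs with hp
    exacts [(hω p hp).1, isDist_single p]
  · simpa only [dif_pos hp] using hω p hp
  · simp only [dif_neg hp, psupp_single]
  · simpa only [dif_pos hp] using hQ p hp

lemma IsPolicy.label_eq_of_reach_SDelta {P : S × S → S × S → ℝ} (hP : IsPolicy ℓ τ P)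
    {p d : S × S} (hpd : Reach P p d) (hd : d ∈ SDelta S) : ℓ p.1 = ℓ p.2 := by
  induction hpd using Relation.ReflTransGen.head_induction_on with
  | refl => exact congrArg ℓ hd
  | @head a b hab _ hb =>
    by_contra ha
    have hba : b ∈ ({a} : Set (S × S)) := hP.2.2 a ha ▸ hab
    exact ha (Set.mem_singleton_iff.1 hba ▸ hb)

end Policies

section Coalescing

variable {S L : Type*} [Fintype S] {ℓ : S → L} {τ : S → S → ℝ} {R R' : SetRel S S}

/-- A step of positive probability from `p ∈ R` under some coupling supported in `R`. This is
`SupStep` with the coupling chosen afresh at each step instead of being prescribed by a policy. -/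
def CouplingStep (τ : S → S → ℝ) (R : SetRel S S) (p q : S × S) : Prop :=
  p ∈ R ∧ ∃ ω, IsCoupling ω (τ p.1) (τ p.2) ∧ psupp ω ⊆ R ∧ 0 < ω q

/-- `R` is coalescing: it contains the diagonal, relates only equally labelled states, and the
diagonal can be reached from each of its pairs by coupling steps inside `R`. Such sets witness
robust bisimilarity without reference to policies or probabilities of reaching the diagonal. -/
structure IsCoalescing (ℓ : S → L) (τ : S → S → ℝ) (R : SetRel S S) : Prop where
  SDelta_subset : SDelta S ⊆ R
  label_eq : ∀ p ∈ R, ℓ p.1 = ℓ p.2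
  reaches : ∀ p ∈ R, ∃ d ∈ SDelta S, Relation.ReflTransGen (CouplingStep τ R) p d

namespace CouplingStep

variable {p q : S × S}

lemma mono (hRR' : R ⊆ R') (h : CouplingStep τ R p q) : CouplingStep τ R' p q := by
  obtain ⟨hp, ω, hω, hωR, hq⟩ := h
  exact ⟨hRR' hp, ω, hω, hωR.trans hRR', hq⟩

lemma swap (h : CouplingStep τ R p q) : CouplingStep τ R.inv p.swap q.swap := by
  obtain ⟨hp, ω, hω, hωR, hq⟩ := h
  exact ⟨hp, fun r ↦ ω r.swap, hω.swap, fun r hr ↦ hωR hr, hq⟩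

lemma comp (h : CouplingStep τ R p q) {z : S} (hz : (p.2, z) ∈ R') {ω' : S × S → ℝ}
    (hω' : IsCoupling ω' (τ p.2) (τ z)) (hω'R' : psupp ω' ⊆ R') :
    ∃ z', (q.2, z') ∈ R' ∧ CouplingStep τ (R.comp R') (p.1, z) (q.1, z') := by
  obtain ⟨hp, ω, hω, hωR, hq⟩ := h
  obtain ⟨z', hz'⟩ := hω'.exists_pos_of_fst_pos (hq.trans_le (hω.apply_le_snd q.1 q.2))
  have hsupp := hω.psupp_glue hω'
  exact ⟨z', hω'R' hz', ⟨p.2, hp, hz⟩, _, hω.isCoupling_glue hω',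
    hsupp.trans_subset (SetRel.comp_subset_comp hωR hω'R'),
    hsupp.ge (SetRel.prodMk_mem_comp hq hz')⟩

end CouplingStep

lemma exists_reflTransGen_couplingStep_comp
    (hR' : ∀ p ∈ R', ∃ ω, IsCoupling ω (τ p.1) (τ p.2) ∧ psupp ω ⊆ R') {p d : S × S}
    (hpd : Relation.ReflTransGen (CouplingStep τ R) p d) {z : S} (hz : (p.2, z) ∈ R') :
    ∃ z', (d.2, z') ∈ R' ∧
      Relation.ReflTransGen (CouplingStep τ (R.comp R')) (p.1, z) (d.1, z') := by
  induction hpd using Relation.ReflTransGen.head_induction_on generalizing z with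
  | refl => exact ⟨z, hz, .refl⟩
  | head hab _ ih =>
    obtain ⟨ω', hω', hω'R'⟩ := hR' _ hz
    obtain ⟨z₁, hz₁, hstep⟩ := hab.comp hz hω' hω'R'
    obtain ⟨z', hz', hpath⟩ := ih hz₁
    exact ⟨z', hz', hpath.head hstep⟩

lemma isCoalescing_SDelta : IsCoalescing ℓ τ (SDelta S) where
  SDelta_subset := subset_rfl
  label_eq _ hp := congrArg ℓ hp
  reaches p hp := ⟨p, hp, .refl⟩

namespace IsCoalescing

lemma exists_isCoupling (hR : IsCoalescing ℓ τ R) (hτ : IsTransFn τ) {p : S × S} (hp : p ∈ R) :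
    ∃ ω, IsCoupling ω (τ p.1) (τ p.2) ∧ psupp ω ⊆ R := by
  obtain ⟨d, hd, hpd⟩ := hR.reaches p hp
  rcases hpd.cases_head with rfl | ⟨q, ⟨_, ω, hω, hωR, _⟩, _⟩
  · obtain ⟨ω, hω, hωΔ⟩ := (hτ p.1).exists_isCoupling_psupp_subset_SDelta
    have hp₁₂ : p.1 = p.2 := hd
    exact ⟨ω, hp₁₂ ▸ hω, hωΔ.trans hR.SDelta_subset⟩
  · exact ⟨ω, hω, hωR⟩

lemma inv (hR : IsCoalescing ℓ τ R) : IsCoalescing ℓ τ R.inv where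
  SDelta_subset p hp := hR.SDelta_subset (Eq.symm hp : p.swap ∈ SDelta S)
  label_eq p hp := (hR.label_eq p.swap hp).symm
  reaches p hp := by
    obtain ⟨d, hd, hpd⟩ := hR.reaches p.swap hp
    exact ⟨d.swap, Eq.symm hd, hpd.lift Prod.swap fun _ _ ↦ CouplingStep.swap⟩

lemma comp (hR : IsCoalescing ℓ τ R) (hR' : IsCoalescing ℓ τ R') (hτ : IsTransFn τ) :
    IsCoalescing ℓ τ (R.comp R') where
  SDelta_subset p hp := ⟨p.1, hR.SDelta_subset rfl, hR'.SDelta_subset hp⟩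
  label_eq := by
    rintro ⟨x, z⟩ ⟨y, hxy, hyz⟩
    exact (hR.label_eq _ hxy).trans (hR'.label_eq _ hyz)
  reaches := by
    rintro ⟨x, z⟩ ⟨y, hxy, hyz⟩
    obtain ⟨⟨u, v⟩, huv : u = v, hpath⟩ := hR.reaches _ hxy
    subst huv
    obtain ⟨z', hz', hfirst⟩ :=
      exists_reflTransGen_couplingStep_comp (fun _ ↦ hR'.exists_isCoupling hτ) hpath hyz
    obtain ⟨d, hd, hsecond⟩ := hR'.reaches _ hz'
    have hR'comp : R' ⊆ R.comp R' := fun p hp ↦ ⟨p.1, hR.SDelta_subset rfl, hp⟩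
    exact ⟨d, hd,
      hfirst.trans (Relation.ReflTransGen.mono (fun _ _ ↦ CouplingStep.mono hR'comp) _ _ hsecond)⟩

lemma exists_isPolicy (hR : IsCoalescing ℓ τ R) (hτ : IsTransFn τ) :
    ∃ P, IsPolicy ℓ τ P ∧ IsClosedClass P R ∧ ∀ p q, CouplingStep τ R p q → 0 < P p q := by
  obtain ⟨P, hP, hPR⟩ := exists_isPolicy_of_forall_exists (ℓ := ℓ) (τ := τ)
    (Q := fun p ω ↦ p ∈ R → psupp ω ⊆ R ∧
      ∀ η, IsCoupling η (τ p.1) (τ p.2) → psupp η ⊆ R → psupp η ⊆ psupp ω) fun p _ ↦ by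
      by_cases hp : p ∈ R
      · obtain ⟨ω, hω, hωR⟩ := hR.exists_isCoupling hτ hp
        obtain ⟨η, hη, hgreatest⟩ := hω.exists_greatest_psupp hωR
        exact ⟨η, hη, fun _ ↦ hgreatest⟩
      · exact ⟨_, isCoupling_prod (hτ p.1) (hτ p.2), fun hpR ↦ absurd hpR hp⟩
  refine ⟨P, hP, fun p hp ↦ (hPR p (hR.label_eq p hp) hp).1, ?_⟩
  rintro p q ⟨hp, ω, hω, hωR, hq⟩
  exact (hPR p (hR.label_eq p hp) hp).2 ω hω hωR hq

lemma robust (hR : IsCoalescing ℓ τ R) (hτ : IsTransFn τ) {s t : S} (hst : (s, t) ∈ R) :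
    Robust ℓ τ s t := by
  obtain ⟨P, hP, hclosed, hstep⟩ := hR.exists_isPolicy hτ
  obtain ⟨ρ, hρ⟩ := exists_isLfpOn_reachF hP.1
  have hreach : ∀ p ∈ R, ∃ d ∈ SDelta S, Reach P p d := fun p hp ↦
    (hR.reaches p hp).imp fun _ ↦ .imp_right (Relation.ReflTransGen.mono hstep p _)
  have hone : 1 ≤ ρ (s, t) :=
    one_le_of_reachF_eq_self_of_isClosedClass hP.1 hρ.2.1 hclosed hreach hst
  exact ⟨P, ρ, hP, hρ, le_antisymm (hρ.1 (s, t)).2 hone⟩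

end IsCoalescing

lemma IsPolicy.isCoalescing_setOf_eq_one {P : S × S → S × S → ℝ} (hP : IsPolicy ℓ τ P)
    {ρ : S × S → ℝ} (hρ : IsLfpOn (ReachF P) ρ) : IsCoalescing ℓ τ {p | ρ p = 1} := by
  have hreach (p : S × S) (hp : ρ p = 1) : ∃ d ∈ SDelta S, Reach P p d :=
    hρ.exists_reach_SDelta hP.1 (hp ▸ one_pos)
  have hlabel (p : S × S) (hp : ρ p = 1) : ℓ p.1 = ℓ p.2 :=
    let ⟨_, hd, hpd⟩ := hreach p hp
    hP.label_eq_of_reach_SDelta hpd hd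
  refine ⟨fun p ↦ eq_one_of_reachF_eq_self_of_mem_SDelta hρ.2.1, hlabel, fun p hp ↦ ?_⟩
  obtain ⟨d, hd, hpd⟩ := hreach p hp
  induction hpd using Relation.ReflTransGen.head_induction_on with
  | refl => exact ⟨d, hd, .refl⟩
  | @head a b hab _ ih =>
    by_cases ha : a ∈ SDelta S
    · exact ⟨a, ha, .refl⟩
    · have hsupp : psupp (P a) ⊆ {p | ρ p = 1} := fun q hq ↦
        eq_one_of_reachF_eq_self_of_mem_psupp hρ.2.1 (fun r ↦ (hρ.1 r).2) (hP.1 a) hp ha hq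
      obtain ⟨d', hd', hbd'⟩ := ih (hsupp hab)
      exact ⟨d', hd', hbd'.head ⟨hp, P a, hP.2.1 a (hlabel a hp), hsupp, hab⟩⟩

lemma robust_iff_exists_isCoalescing (hτ : IsTransFn τ) {s t : S} :
    Robust ℓ τ s t ↔ ∃ R, IsCoalescing ℓ τ R ∧ (s, t) ∈ R :=
  ⟨fun ⟨_, _, hP, hρ, hst⟩ ↦ ⟨_, hP.isCoalescing_setOf_eq_one hρ, hst⟩,
    fun ⟨_, hR, hst⟩ ↦ hR.robust hτ hst⟩

lemma equivalence_robust (hτ : IsTransFn τ) : Equivalence (Robust ℓ τ) where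
  refl s := isCoalescing_SDelta.robust hτ (rfl : (s, s) ∈ SDelta S)
  symm hst := by
    obtain ⟨R, hR, hst⟩ := (robust_iff_exists_isCoalescing hτ).1 hst
    exact hR.inv.robust hτ hst
  trans hst htu := by
    obtain ⟨R, hR, hst⟩ := (robust_iff_exists_isCoalescing hτ).1 hst
    obtain ⟨R', hR', htu⟩ := (robust_iff_exists_isCoalescing hτ).1 htu
    exact (hR.comp hR' hτ).robust hτ ⟨_, hst, htu⟩

end Coalescing

theorem robust_is_bisimulation_general {S L : Type*} [Fintype S] (ℓ : S → L)
    {τ : S → S → ℝ} (hτ : IsTransFn τ) :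
    IsBisim ℓ τ {p : S × S | Robust ℓ τ p.1 p.2} := by
  refine ⟨equivalence_robust hτ, fun p hp ↦ ?_⟩
  obtain ⟨R, hR, hpR⟩ := (robust_iff_exists_isCoalescing hτ).1 hp
  obtain ⟨ω, hω, hωR⟩ := hR.exists_isCoupling hτ hpR
  exact ⟨hR.label_eq p hpR, ω, hω, fun q hq ↦ hR.robust hτ (hωR hq)⟩

/-- Lemma 6: robust probabilistic bisimilarity `≃` is a probabilistic bisimulation. -/
theorem robust_is_bisimulation {S L : Type*} [Fintype S] [Nonempty S] [Fintype L]
    (ℓ : S → L) (hℓ : ∃ a b : S, ℓ a ≠ ℓ b)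
    (τ : S → S → ℝ) (hτ : IsTransFn τ) :
    IsBisim ℓ τ {p : S × S | Robust ℓ τ p.1 p.2} :=
  robust_is_bisimulation_general ℓ hτ
end
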